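/- Suppose x̄_N = M. Then, viewed as a function of the single variable w_M (with all other arguments fixed), F̄_{M,N}(z_1,…,z_N|w_1,…,w_M|x̄_1,…,x̄_N) is a polynomial in w_M of degree at most 2N−1. -/

import Mathlib

open Finset

def eps {N : ℕ} (τ : Fin N → Bool) (j : Fin N) : ℤ := if τ j then 1 else -1

noncomputable def pairFactor (a Z1 Z2 : ℂ) (t1 t2 : ℤ) : ℂ :=
  ((a ^ (2:ℤ) * Z1 ^ t1 * Z2 ^ t2 - a ^ (-2:ℤ) * Z1 ^ (-t1) * Z2 ^ (-t2)) *
   (a ^ (2:ℤ) * Z1 ^ (-t1) * Z2 ^ t2 - a ^ (-2:ℤ) * Z1 ^ t1 * Z2 ^ (-t2))) /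
  ((Z1 ^ t1 * Z2 ^ t2 - Z1 ^ (-t1) * Z2 ^ (-t2)) *
   (Z1 ^ (-t1) * Z2 ^ t2 - Z1 ^ t1 * Z2 ^ (-t2)))

/-- The symmetric function `F_{M,N}(z_1,…,z_N|w_1,…,w_M|x_1,…,x_N)`,
where `x k` for `k = 0,…,N-1` encodes `x_{k+1}`. -/
noncomputable def FF (a b : ℂ) (M N : ℕ) (z : Fin N → ℂ) (w : Fin M → ℂ) (x : ℕ → ℕ) : ℂ :=
  (a ^ (2:ℤ) - a ^ (-2:ℤ)) ^ N *
  (∏ j, (-(a ^ (2:ℤ) * z j ^ (2:ℤ)) + a ^ (-2:ℤ) * z j ^ (-2:ℤ))) *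
  ∑ σ : Equiv.Perm (Fin N), ∑ τ : Fin N → Bool,
    (∏ j, (z j ^ (2 * eps τ j) - z j ^ (-(2 * eps τ j)))⁻¹) *
    (∏ p ∈ Finset.univ.filter (fun p : Fin N × Fin N => p.1 < p.2),
      pairFactor a (z (σ p.1)) (z (σ p.2)) (eps τ (σ p.1)) (eps τ (σ p.2))) *
    (∏ k, (b * a⁻¹ * z (σ k) ^ (-(eps τ (σ k))) - b⁻¹ * a * z (σ k) ^ (eps τ (σ k)))) *
    (∏ k, ∏ j : Fin M, (a * z (σ k) ^ (-(eps τ (σ k))) - a⁻¹ * z (σ k) ^ (eps τ (σ k)) * w j)) *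
    (∏ k : Fin N, ∏ j ∈ Finset.univ.filter (fun j : Fin M => (j : ℕ) + 1 < x k.val),
      (a * z (σ k) ^ (-(eps τ (σ k))) * w j - a⁻¹ * z (σ k) ^ (eps τ (σ k)))) *
    (∏ k : Fin N, ∏ j ∈ Finset.univ.filter (fun j : Fin M => x k.val ≤ (j : ℕ)),
      (a * z (σ k) ^ (eps τ (σ k)) - a⁻¹ * z (σ k) ^ (-(eps τ (σ k))) * w j))

/-- The dual symmetric function `F̄_{M,N}(z_1,…,z_N|w_1,…,w_M|x̄_1,…,x̄_N)`. -/
noncomputable def FBar (a b : ℂ) (M N : ℕ) (z : Fin N → ℂ) (w : Fin M → ℂ) (x : ℕ → ℕ) : ℂ :=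
  (a ^ (2:ℤ) - a ^ (-2:ℤ)) ^ N *
  (∏ j, (-(a ^ (2:ℤ) * z j ^ (2:ℤ)) + a ^ (-2:ℤ) * z j ^ (-2:ℤ))) *
  ∑ σ : Equiv.Perm (Fin N), ∑ τ : Fin N → Bool,
    (∏ j, (z j ^ (2 * eps τ j) - z j ^ (-(2 * eps τ j)))⁻¹) *
    (∏ p ∈ Finset.univ.filter (fun p : Fin N × Fin N => p.1 < p.2),
      pairFactor a (z (σ p.1)) (z (σ p.2)) (eps τ (σ p.1)) (eps τ (σ p.2))) *
    (∏ k, (b * a * z (σ k) ^ (eps τ (σ k)) - b⁻¹ * a⁻¹ * z (σ k) ^ (-(eps τ (σ k))))) *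
    (∏ k, ∏ j : Fin M, (a * z (σ k) ^ (-(eps τ (σ k))) * w j - a⁻¹ * z (σ k) ^ (eps τ (σ k)))) *
    (∏ k : Fin N, ∏ j ∈ Finset.univ.filter (fun j : Fin M => (j : ℕ) + 1 < x k.val),
      (a * z (σ k) ^ (-(eps τ (σ k))) - a⁻¹ * z (σ k) ^ (eps τ (σ k)) * w j)) *
    (∏ k : Fin N, ∏ j ∈ Finset.univ.filter (fun j : Fin M => x k.val ≤ (j : ℕ)),
      (a * z (σ k) ^ (eps τ (σ k)) * w j - a⁻¹ * z (σ k) ^ (-(eps τ (σ k)))))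

/-- `xfun T k` is the `(k+1)`-st smallest element of `T`, in 1-based labelling. -/
def xfun {M : ℕ} (T : Finset (Fin M)) (k : ℕ) : ℕ :=
  ((T.sort (· ≤ ·)).map (fun j : Fin M => (j : ℕ) + 1)).getD k 0

/-- `f` is a polynomial function of degree at most `d`. -/
def PolyLe (d : ℕ) (f : ℂ → ℂ) : Prop :=
  ∃ p : Polynomial ℂ, p.degree ≤ (d : WithBot ℕ) ∧ ∀ u, f u = p.eval u

lemma PolyLe.mono {d e : ℕ} {f : ℂ → ℂ} (h : PolyLe d f) (hde : d ≤ e) : PolyLe e f := by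
  obtain ⟨p, hp, hf⟩ := h
  exact ⟨p, hp.trans (by exact_mod_cast hde), hf⟩

lemma PolyLe.const (c : ℂ) : PolyLe 0 (fun _ => c) :=
  ⟨Polynomial.C c, by simpa using Polynomial.degree_C_le, by simp⟩

lemma PolyLe.mul {d e : ℕ} {f g : ℂ → ℂ} (hf : PolyLe d f) (hg : PolyLe e g) :
    PolyLe (d + e) (fun u => f u * g u) := by
  obtain ⟨p, hp, hf⟩ := hf
  obtain ⟨q, hq, hg⟩ := hg
  refine ⟨p * q, ?_, fun u => by simp [hf, hg]⟩
  rw [Polynomial.degree_mul]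
  push_cast
  exact add_le_add hp hq

lemma PolyLe.const_mul {d : ℕ} {f : ℂ → ℂ} (c : ℂ) (hf : PolyLe d f) :
    PolyLe d (fun u => c * f u) := by
  simpa using (PolyLe.const c).mul hf

lemma PolyLe.sum {ι : Type*} {d : ℕ} (s : Finset ι) {f : ι → ℂ → ℂ}
    (h : ∀ i ∈ s, PolyLe d (f i)) : PolyLe d (fun u => ∑ i ∈ s, f i u) := by
  classical
  choose! p hp hf using h
  refine ⟨∑ i ∈ s, p i, ?_, fun u => ?_⟩
  · exact (Polynomial.degree_sum_le _ _).trans (Finset.sup_le hp)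
  · rw [Polynomial.eval_finsetSum]
    exact Finset.sum_congr rfl fun i hi => hf i hi u

lemma PolyLe.prod {ι : Type*} (s : Finset ι) {d : ι → ℕ} {f : ι → ℂ → ℂ}
    (h : ∀ i ∈ s, PolyLe (d i) (f i)) :
    PolyLe (∑ i ∈ s, d i) (fun u => ∏ i ∈ s, f i u) := by
  classical
  induction s using Finset.induction_on with
  | empty => simpa using PolyLe.const 1
  | insert i s hi ih =>
    simp only [Finset.sum_insert hi, Finset.prod_insert hi]
    exact (h i (by simp)).mul (ih fun j hj => h j (by simp [hj]))

lemma PolyLe.factor {M : ℕ} (w : Fin M → ℂ) (m j : Fin M) (c e : ℂ) :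
    PolyLe (if j = m then 1 else 0) (fun u => c * Function.update w m u j + e) := by
  by_cases h : j = m
  · subst h
    refine ⟨Polynomial.C c * Polynomial.X + Polynomial.C e, ?_, fun u => by simp⟩
    simpa using Polynomial.degree_linear_le
  · simpa [Function.update_of_ne h, h] using PolyLe.const (c * w j + e)

lemma PolyLe.factors {M : ℕ} (w : Fin M → ℂ) (m : Fin M) (S : Finset (Fin M)) (c e : ℂ) :
    PolyLe (if m ∈ S then 1 else 0) (fun u => ∏ j ∈ S, (c * Function.update w m u j + e)) := by
  have h := PolyLe.prod S (fun j _ => PolyLe.factor w m j c e)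
  rwa [Finset.sum_ite_eq'] at h

/-- Property (1) for the dual: when `x̄_N = M`, the symmetric function `F̄_{M,N}`,
viewed as a function of `w_M` alone, is a polynomial in `w_M` of degree at most
`2N−1`. -/
theorem FBar_polynomial_in_wM (a b : ℂ) (M N : ℕ) (hM : 0 < M) (hN : 0 < N)
    (z : Fin N → ℂ) (w : Fin M → ℂ) (x : ℕ → ℕ)
    (ha : a ≠ 0) (hb : b ≠ 0) (hz : ∀ j, z j ≠ 0) (hz4 : ∀ j, z j ^ 4 ≠ 1)
    (hzz : ∀ j k, j ≠ k → z j ^ 2 * z k ^ 2 ≠ 1)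
    (hzz' : ∀ j k, j ≠ k → z j ^ 2 ≠ z k ^ 2)
    (hx1 : ∀ k : Fin N, 1 ≤ x k.val) (hxM : ∀ k : Fin N, x k.val ≤ M)
    (hmono : ∀ j k : Fin N, j < k → x j.val < x k.val)
    (hlast : x (N - 1) = M) :
    ∃ p : Polynomial ℂ, p.degree ≤ ((2 * N - 1 : ℕ) : WithBot ℕ) ∧
      ∀ u : ℂ,
        FBar a b M N z (Function.update w ⟨M - 1, Nat.sub_lt hM Nat.one_pos⟩ u) x
          = p.eval u := by
  obtain ⟨n, rfl⟩ : ∃ n, N = n + 1 := ⟨N - 1, by omega⟩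
  change PolyLe (2 * (n + 1) - 1) _
  unfold FBar
  set m : Fin M := ⟨M - 1, Nat.sub_lt hM Nat.one_pos⟩ with hm
  refine PolyLe.const_mul _ (PolyLe.sum _ fun σ _ => PolyLe.sum _ fun τ _ => ?_)
  have h1 : PolyLe (n + 1) (fun u => ∏ k : Fin (n + 1), ∏ j : Fin M,
      (a * z (σ k) ^ (-(eps τ (σ k))) * Function.update w m u j
        - a⁻¹ * z (σ k) ^ (eps τ (σ k)))) := by
    refine (PolyLe.prod Finset.univ (d := fun _ => 1) fun k _ => ?_).mono (by simp)
    simpa [sub_eq_add_neg] using PolyLe.factors w m Finset.univ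
      (a * z (σ k) ^ (-(eps τ (σ k)))) (-(a⁻¹ * z (σ k) ^ (eps τ (σ k))))
  have h2 : PolyLe 0 (fun u => ∏ k : Fin (n + 1),
      ∏ j ∈ Finset.univ.filter (fun j : Fin M => (j : ℕ) + 1 < x k.val),
      (a * z (σ k) ^ (-(eps τ (σ k)))
        - a⁻¹ * z (σ k) ^ (eps τ (σ k)) * Function.update w m u j)) := by
    refine (PolyLe.prod Finset.univ (d := fun _ => 0) fun k _ => ?_).mono (by simp)
    have h := PolyLe.factors w m (Finset.univ.filter (fun j : Fin M => (j : ℕ) + 1 < x k.val))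
      (-(a⁻¹ * z (σ k) ^ (eps τ (σ k)))) (a * z (σ k) ^ (-(eps τ (σ k))))
    have hn : ¬ (m ∈ Finset.univ.filter (fun j : Fin M => (j : ℕ) + 1 < x k.val)) := by
      have := hxM k
      simp [hm]
      omega
    rw [if_neg hn] at h
    convert h using 4
    ring
  have h3 : PolyLe n (fun u => ∏ k : Fin (n + 1),
      ∏ j ∈ Finset.univ.filter (fun j : Fin M => x k.val ≤ (j : ℕ)),
      (a * z (σ k) ^ (eps τ (σ k)) * Function.update w m u j
        - a⁻¹ * z (σ k) ^ (-(eps τ (σ k))))) := by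
    refine (PolyLe.prod Finset.univ (d := fun k => if k = Fin.last n then 0 else 1)
      fun k _ => ?_).mono (by simp [Fin.sum_univ_castSucc])
    have h := PolyLe.factors w m (Finset.univ.filter (fun j : Fin M => x k.val ≤ (j : ℕ)))
      (a * z (σ k) ^ (eps τ (σ k))) (-(a⁻¹ * z (σ k) ^ (-(eps τ (σ k)))))
    simp only [← sub_eq_add_neg] at h
    refine h.mono ?_
    by_cases hk : k = Fin.last n
    · subst hk
      have hl : x n = M := by simpa using hlast
      have hn : ¬ (m ∈ Finset.univ.filter
          (fun j : Fin M => x (Fin.last n).val ≤ (j : ℕ))) := by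
        simp [hm, hl]
        omega
      rw [if_neg hn]
      simp
    · rw [if_neg hk]
      split_ifs <;> simp
  exact (((PolyLe.const_mul _ h1).mul h2).mul h3).mono (by omega)
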